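/- arXiv:1503.05478 — 5 statements merged into one kernel-verified Lean document; each statement's English description precedes it below -/
import Mathlib

section
/- Let k be a field, V a nonzero finite-dimensional k-vector space, and g ∈ GL(V) an automorphism with g ≠ 1 which fixes some hyperplane of V pointwise. If g has finite order m and m is invertible in k (i.e. the characteristic of k does not divide m), then det(g) ≠ 1. -/
/-- An endomorphism fixing the kernel of `f` pointwise is the transvection along `f` with vector
`g v - v`, for any `v` with `f v = 1`. -/
theorem LinearMap.eq_transvection_of_forall_ker {k V : Type*} [CommRing k] [AddCommGroup V]
    [Module k V] (g : V →ₗ[k] V) (f : Module.Dual k V) (hfix : ∀ w, f w = 0 → g w = w)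
    {v : V} (hv : f v = 1) : g = LinearMap.transvection f (g v - v) := by
  ext x
  have h := hfix (x - f x • v) (by simp [hv])
  rw [map_sub, map_smul, sub_eq_iff_eq_add] at h
  rw [LinearMap.transvection.apply, h]
  module

/-- The powers of a transvection `x ↦ x + f x • u` with `f u = 0`. -/
theorem LinearMap.transvection_pow_apply {k V : Type*} [CommRing k] [AddCommGroup V]
    [Module k V] (f : Module.Dual k V) {u : V} (hu : f u = 0) (n : ℕ) (x : V) :
    (LinearMap.transvection f u ^ n) x = x + ((n : k) * f x) • u := by
  induction n with
  | zero => simp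
  | succ n ih =>
    rw [pow_succ', Module.End.mul_apply, ih, LinearMap.transvection.apply]
    simp only [map_add, map_smul, hu, smul_zero, add_zero, Nat.cast_succ]
    module

/-- Let `k` be a field, `V` a nonzero finite-dimensional `k`-vector space, and `g ∈ GL(V)`
an automorphism with `g ≠ 1` which fixes some hyperplane of `V` pointwise. If `g` has finite
order `m` and `m` is invertible in `k`, then `det g ≠ 1`. -/
theorem det_ne_one_of_pseudoreflection {k V : Type*} [Field k] [AddCommGroup V] [Module k V]
    [FiniteDimensional k V] [Nontrivial V]
    (g : V ≃ₗ[k] V) (hg : g ≠ 1)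
    (W : Submodule k V) (hW : Module.finrank k (V ⧸ W) = 1)
    (hfix : ∀ w ∈ W, g w = w)
    (m : ℕ) (hord : orderOf g = m) (hm : (m : k) ≠ 0) :
    LinearMap.det (g : V →ₗ[k] V) ≠ 1 := by
  intro hdet
  let e : (V ⧸ W) ≃ₗ[k] k := LinearEquiv.ofFinrankEq _ _ (by simpa using hW)
  let f : Module.Dual k V := e.toLinearMap ∘ₗ W.mkQ
  have hf : ∀ w, f w = 0 → (g : V →ₗ[k] V) w = w := fun w hw =>
    hfix w (by simpa [f] using hw)
  obtain ⟨v, hv⟩ : ∃ v, f v = 1 := (e.surjective.comp W.mkQ_surjective) 1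
  have hgt := LinearMap.eq_transvection_of_forall_ker _ f hf hv
  generalize (g : V →ₗ[k] V) v - v = u at hgt
  have hu : f u = 0 := by
    rw [hgt, LinearMap.transvection.det] at hdet
    simpa using hdet
  have hpow : (g : V →ₗ[k] V) ^ m = 1 := by
    have h : g ^ m = 1 := hord ▸ pow_orderOf_eq_one g
    ext x
    have hx := congrArg (fun φ : V ≃ₗ[k] V => φ x) h
    simpa [Module.End.pow_apply, LinearEquiv.pow_apply] using hx
  have hu0 : u = 0 := by
    have h := LinearMap.transvection_pow_apply f hu m v
    rw [← hgt, hpow] at h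
    simpa [hv, hm] using h
  apply hg
  ext x
  have hx := congrArg (fun φ : V →ₗ[k] V => φ x) hgt
  simpa [hu0] using hx
end

section
/- Let V be a finite-dimensional complex vector space, H a finite subgroup of GL(V), W a hyperplane of V, and f = ∏_{U ∈ H·W} ℓ_U the product of chosen nonzero linear functionals vanishing on the hyperplanes in the H-orbit of W, with χ : H → ℂ* the character defined by h·f = χ(h)·f. Let r ∈ H be a pseudoreflection with fixed hyperplane W_r. If W_r belongs to the H-orbit of W, then χ(r) = det(r)^{−1}; otherwise χ(r) = 1. -/
open scoped Classical

/-- A nonzero functional vanishing on a subspace of codimension one has it as its kernel. -/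
theorem ker_eq_of_finrank_add_one {K V : Type*} [Field K] [AddCommGroup V] [Module K V]
    [FiniteDimensional K V] {U : Submodule K V}
    (hU : Module.finrank K U + 1 = Module.finrank K V) {l : V →ₗ[K] K} (hl : l ≠ 0)
    (hlU : ∀ v ∈ U, l v = 0) : LinearMap.ker l = U := by
  have hker := Module.Dual.finrank_ker_add_one_of_ne_zero (f := l) hl
  exact (Submodule.eq_of_le_of_finrank_le (fun v hv => hlU v hv) (by omega)).symm

/-- An endomorphism fixing the kernel of a nonzero functional pointwise is of the form
`v ↦ v + l v • a`. -/
theorem exists_eq_transvection_of_fixes_ker {K V : Type*} [Field K] [AddCommGroup V] [Module K V]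
    {l : V →ₗ[K] K} (hl : l ≠ 0) (g : V →ₗ[K] V) (hg : ∀ v ∈ LinearMap.ker l, g v = v) :
    ∃ a, g = LinearMap.transvection l a := by
  obtain ⟨v₀, hv₀⟩ := LinearMap.surjective hl 1
  refine ⟨g v₀ - v₀, LinearMap.ext fun v => ?_⟩
  have h := hg (v - l v • v₀) (by simp [hv₀])
  rw [map_sub, map_smul, sub_eq_iff_eq_add] at h
  rw [LinearMap.transvection.apply, h, smul_sub]
  abel

/-- A nontrivial map `v ↦ v + l v • a` of finite order in characteristic zero has `l a ≠ 0`. -/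
theorem apply_ne_zero_of_isOfFinOrder_transvection {K V : Type*} [Field K] [CharZero K]
    [AddCommGroup V] [Module K V] {g : V ≃ₗ[K] V} (hg : IsOfFinOrder g) (hg1 : g ≠ 1)
    {l : V →ₗ[K] K} {a : V} (hga : ∀ v, g v = v + l v • a) : l a ≠ 0 := by
  intro hla
  have hpow (n : ℕ) (v : V) : (g ^ n) v = v + (n * l v) • a := by
    induction n with
    | zero => simp
    | succ n ih =>
      rw [pow_succ', LinearEquiv.mul_apply, ih, hga, map_add, map_smul, hla]
      push_cast
      simp only [smul_zero, add_zero]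
      module
  refine hg1 (LinearEquiv.ext fun v => ?_)
  have h := hpow (orderOf g) v
  rw [pow_orderOf_eq_one, LinearEquiv.coe_one, id, left_eq_add, smul_eq_zero, mul_eq_zero] at h
  rcases h with (h | h) | h
  · exact absurd (Nat.cast_eq_zero.mp h) hg.orderOf_pos.ne'
  · simp [hga, h]
  · simp [hga, h]

/-- A subspace contained in none of the kernels of finitely many functionals has a vector at
which their product does not vanish. -/
theorem exists_mem_prod_apply_ne_zero {ι K V : Type*} [Field K] [Infinite K] [AddCommGroup V]
    [Module K V] (p : Submodule K V) (s : Finset ι) (l : ι → V →ₗ[K] K)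
    (h : ∀ i ∈ s, ¬ p ≤ LinearMap.ker (l i)) : ∃ w ∈ p, ∏ i ∈ s, l i w ≠ 0 := by
  obtain ⟨w, hw, hne⟩ := Module.Dual.exists_forall_mem_ne_zero_of_forall_exists p
    (fun i : s => l i) fun i => by
      obtain ⟨x, hx, hxl⟩ := SetLike.not_le_iff_exists.mp (h i i.2)
      exact ⟨x, hx, hxl⟩
  exact ⟨w, hw, Finset.prod_ne_zero_iff.mpr fun i hi => hne ⟨i, hi⟩⟩

/-- Let `V` be a finite-dimensional complex vector space, `H` a finite subgroup of `GL(V)`,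
`W` a hyperplane, `f = ∏_{U ∈ H·W} ℓ_U` the product of chosen nonzero linear functionals
vanishing on the hyperplanes of the `H`-orbit of `W`, and `χ : H → ℂˣ` the character with
`h·f = χ(h)·f`. If `r ∈ H` is a pseudoreflection with fixed hyperplane `W_r`, then
`χ(r) = det(r)⁻¹` if `W_r` belongs to the orbit, and `χ(r) = 1` otherwise. -/
theorem character_value_at_pseudoreflection {V : Type*} [AddCommGroup V] [Module ℂ V]
    [FiniteDimensional ℂ V]
    (H : Subgroup (V ≃ₗ[ℂ] V)) [Finite H]
    (W : Submodule ℂ V) (hW : Module.finrank ℂ (V ⧸ W) = 1)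
    (O : Finset (Submodule ℂ V))
    (hO : ∀ U, U ∈ O ↔ ∃ h ∈ H, U = W.map (h : V →ₗ[ℂ] V))
    (ℓ : Submodule ℂ V → (V →ₗ[ℂ] ℂ))
    (hℓ0 : ∀ U ∈ O, ℓ U ≠ 0) (hℓv : ∀ U ∈ O, ∀ v ∈ U, ℓ U v = 0)
    (χ : H →* ℂˣ)
    (hχ : ∀ h : H, ∀ v : V,
      (∏ U ∈ O, ℓ U (((h⁻¹ : H) : V ≃ₗ[ℂ] V) v)) = (χ h : ℂ) * ∏ U ∈ O, ℓ U v)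
    (r : H) (hr : (r : V ≃ₗ[ℂ] V) ≠ 1)
    (Wr : Submodule ℂ V) (hWr : Module.finrank ℂ (V ⧸ Wr) = 1)
    (hfix : ∀ w ∈ Wr, (r : V ≃ₗ[ℂ] V) w = w) :
    (χ r : ℂ) = if Wr ∈ O then (LinearMap.det ((r : V ≃ₗ[ℂ] V) : V →ₗ[ℂ] V))⁻¹ else 1 := by
  have hcodimWr : Module.finrank ℂ Wr + 1 = Module.finrank ℂ V := by
    have := Wr.finrank_quotient_add_finrank
    omega
  have hcodim : ∀ U ∈ O, Module.finrank ℂ U + 1 = Module.finrank ℂ V := by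
    intro U hU
    obtain ⟨h, -, rfl⟩ := (hO U).mp hU
    have := W.finrank_quotient_add_finrank
    have := LinearEquiv.finrank_map_eq h W
    omega
  have hker : ∀ U ∈ O, LinearMap.ker (ℓ U) = U := fun U hU =>
    ker_eq_of_finrank_add_one (hcodim U hU) (hℓ0 U hU) (hℓv U hU)
  have hnle : ∀ U ∈ O, U ≠ Wr → ¬ Wr ≤ LinearMap.ker (ℓ U) := by
    intro U hU hne hle
    rw [hker U hU] at hle
    have := hcodim U hU
    exact hne (Submodule.eq_of_le_of_finrank_le hle (by omega)).symm
  have hinv_apply {v w : V} (h : (r : V ≃ₗ[ℂ] V) v = w) :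
      ((r⁻¹ : H) : V ≃ₗ[ℂ] V) w = v := by
    rw [← h]
    exact (r : V ≃ₗ[ℂ] V).symm_apply_apply v
  split_ifs with hmem
  · have hl0 := hℓ0 Wr hmem
    obtain ⟨a, ha⟩ := exists_eq_transvection_of_fixes_ker hl0 ((r : V ≃ₗ[ℂ] V) : V →ₗ[ℂ] V)
      (by rw [hker Wr hmem]; exact hfix)
    have hra (v : V) : (r : V ≃ₗ[ℂ] V) v = v + ℓ Wr v • a := LinearMap.congr_fun ha v
    have hla : ℓ Wr a ≠ 0 := apply_ne_zero_of_isOfFinOrder_transvection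
      (Submonoid.isOfFinOrder_coe.mpr (isOfFinOrder_of_finite r)) hr hra
    set d := LinearMap.det ((r : V ≃ₗ[ℂ] V) : V →ₗ[ℂ] V) with hd
    have hd0 : d ≠ 0 := (LinearEquiv.isUnit_det' _).ne_zero
    have hda : d = 1 + ℓ Wr a := by rw [hd, ha, LinearMap.transvection.det]
    obtain ⟨w, hw, hne⟩ := exists_mem_prod_apply_ne_zero Wr (O.erase Wr) ℓ fun U hU =>
      hnle U (Finset.mem_of_mem_erase hU) (Finset.ne_of_mem_erase hU)
    have hlw := hℓv Wr hmem w hw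
    have hrw (t : ℂ) : ((r⁻¹ : H) : V ≃ₗ[ℂ] V) (w + t • a) = w + (d⁻¹ * t) • a := by
      apply hinv_apply
      rw [hra, map_add, hlw, map_smul, zero_add, smul_eq_mul, add_assoc, ← add_smul, ← mul_one_add,
        ← hda, mul_right_comm, inv_mul_cancel₀ hd0, one_mul]
    have hprod (t : ℂ) : ∏ U ∈ O, ℓ U (w + t • a) =
        t * ℓ Wr a * ∏ U ∈ O.erase Wr, (ℓ U w + t * ℓ U a) := by
      rw [← Finset.mul_prod_erase O _ hmem]
      simp [hlw]
    -- Both sides are continuous in `t` and agree for `t ≠ 0`; compare them at `t = 0`.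
    have hfun : (fun t : ℂ => d⁻¹ * ∏ U ∈ O.erase Wr, (ℓ U w + d⁻¹ * t * ℓ U a)) =
        fun t : ℂ => (χ r : ℂ) * ∏ U ∈ O.erase Wr, (ℓ U w + t * ℓ U a) := by
      refine Continuous.ext_on (dense_compl_singleton (0 : ℂ)) (by fun_prop) (by fun_prop) ?_
      intro t ht
      have h := hχ r (w + t • a)
      rw [hrw, hprod, hprod] at h
      refine mul_left_cancel₀ (mul_ne_zero ht hla) ?_
      linear_combination h
    have h := congrFun hfun 0
    simp only [mul_zero, zero_mul, add_zero] at h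
    exact (mul_right_cancel₀ hne h).symm
  · obtain ⟨w, hw, hne⟩ := exists_mem_prod_apply_ne_zero Wr O ℓ fun U hU =>
      hnle U hU (fun h => hmem (h ▸ hU))
    have h := hχ r w
    rw [hinv_apply (hfix w hw)] at h
    exact (mul_eq_right₀ hne).mp h.symm
end

section
/- Let V be a finite-dimensional complex vector space and H a finite subgroup of GL(V) generated by pseudoreflections, with commutator subgroup H' = [H,H]. Let O_1, …, O_k be the H-orbits of the reflecting hyperplanes of H (the hyperplanes fixed pointwise by some pseudoreflection in H), and for each i let f_i be the product of chosen nonzero linear functionals vanishing on the hyperplanes in O_i. Then the ring of H'-invariant polynomial functions on V is generated as an algebra by the H-invariant polynomial functions together with f_1, …, f_k: ℂ[V]^{H'} = ℂ[V]^{H}[f_1, …, f_k]. -/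
/-- The algebra of polynomial functions on a complex vector space. -/
abbrev polyFunctions (V : Type*) [AddCommGroup V] [Module ℂ V] : Subalgebra ℂ (V → ℂ) :=
  Algebra.adjoin ℂ {q : V → ℂ | ∃ φ : V →ₗ[ℂ] ℂ, q = ⇑φ}

namespace polyFunctions

variable {V : Type*} [AddCommGroup V] [Module ℂ V]

theorem linear_mem (φ : V →ₗ[ℂ] ℂ) : ⇑φ ∈ polyFunctions V :=
  Algebra.subset_adjoin ⟨φ, rfl⟩

theorem comp_linear_mem {p : V → ℂ} (hp : p ∈ polyFunctions V) (g : V →ₗ[ℂ] V) :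
    (fun v => p (g v)) ∈ polyFunctions V := by
  induction hp using Algebra.adjoin_induction with
  | mem x hx =>
    obtain ⟨φ, rfl⟩ := hx
    exact linear_mem (φ.comp g)
  | algebraMap r => exact (polyFunctions V).algebraMap_mem r
  | add x y _ _ hx hy => exact add_mem hx hy
  | mul x y _ _ hx hy => exact mul_mem hx hy

/-- A polynomial function restricts to a one-variable polynomial on every affine line. -/
theorem exists_polynomial_on_line {p : V → ℂ} (hp : p ∈ polyFunctions V) (a b : V) :
    ∃ r : Polynomial ℂ, ∀ t : ℂ, r.eval t = p (a + t • b) := by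
  induction hp using Algebra.adjoin_induction with
  | mem x hx =>
    obtain ⟨φ, rfl⟩ := hx
    exact ⟨.C (φ a) + .C (φ b) * .X, fun t => by simp [mul_comm t]⟩
  | algebraMap r => exact ⟨.C r, fun t => by simp⟩
  | add x y _ _ hx hy =>
    obtain ⟨r, hr⟩ := hx
    obtain ⟨s, hs⟩ := hy
    exact ⟨r + s, fun t => by simp [hr, hs]⟩
  | mul x y _ _ hx hy =>
    obtain ⟨r, hr⟩ := hx
    obtain ⟨s, hs⟩ := hy
    exact ⟨r * s, fun t => by simp [hr, hs]⟩

/-- The restrictions of polynomial functions to a subspace have no zero divisors. -/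
theorem eqOn_zero_of_mul_eqOn_zero {p q : V → ℂ} (hp : p ∈ polyFunctions V)
    (hq : q ∈ polyFunctions V) {W : Submodule ℂ V} (h : ∀ w ∈ W, p w * q w = 0)
    {a : V} (haW : a ∈ W) (ha : p a ≠ 0) : ∀ w ∈ W, q w = 0 := by
  intro b hb
  obtain ⟨r, hr⟩ := exists_polynomial_on_line hp a (b - a)
  obtain ⟨s, hs⟩ := exists_polynomial_on_line hq a (b - a)
  have hrs : r * s = 0 := Polynomial.funext fun t => by
    have := h (a + t • (b - a)) (W.add_mem haW (W.smul_mem t (W.sub_mem hb haW)))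
    simpa [hr, hs] using this
  rcases mul_eq_zero.mp hrs with h0 | h0
  · exact absurd (by simpa [h0] using (hr 0).symm) ha
  · simpa [h0] using (hs 1).symm

/-- A polynomial function vanishing on the kernel of a nonzero linear functional is divisible
by that functional. -/
theorem exists_eq_linear_mul {p : V → ℂ} (hp : p ∈ polyFunctions V) {φ : V →ₗ[ℂ] ℂ}
    (hφ : φ ≠ 0) (h : ∀ v, φ v = 0 → p v = 0) :
    ∃ q ∈ polyFunctions V, ∀ v, p v = φ v * q v := by
  obtain ⟨e, he⟩ : ∃ e, φ e = 1 := LinearMap.surjective hφ 1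
  let π : V →ₗ[ℂ] V := LinearMap.id - φ.smulRight e
  have key : ∃ q ∈ polyFunctions V, ∀ v, p v - p (π v) = φ v * q v := by
    clear h
    induction hp using Algebra.adjoin_induction with
    | mem x hx =>
      obtain ⟨ψ, rfl⟩ := hx
      exact ⟨_, (polyFunctions V).algebraMap_mem (ψ e), fun v => by simp [π]⟩
    | algebraMap r => exact ⟨0, zero_mem _, fun v => by simp⟩
    | add x y _ _ hx hy =>
      obtain ⟨r, hrm, hr⟩ := hx
      obtain ⟨s, hsm, hs⟩ := hy
      refine ⟨r + s, add_mem hrm hsm, fun v => ?_⟩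
      simp only [Pi.add_apply]
      linear_combination hr v + hs v
    | mul x y hxm hym hx hy =>
      obtain ⟨r, hrm, hr⟩ := hx
      obtain ⟨s, hsm, hs⟩ := hy
      refine ⟨r * y + (fun v => x (π v)) * s,
        add_mem (mul_mem hrm hym) (mul_mem (comp_linear_mem hxm π) hsm), fun v => ?_⟩
      simp only [Pi.add_apply, Pi.mul_apply]
      linear_combination y v * hr v + x (π v) * hs v
  obtain ⟨q, hq, hpq⟩ := key
  refine ⟨q, hq, fun v => ?_⟩
  rw [← hpq, h (π v) (by simp [π, he]), sub_zero]

end polyFunctions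

section Hyperplane

variable {V : Type*} [AddCommGroup V] [Module ℂ V]

theorem exists_sub_smul_mem_of_finrank_quotient_eq_one {W : Submodule ℂ V}
    (hW : Module.finrank ℂ (V ⧸ W) = 1) {e : V} (he : e ∉ W) (v : V) :
    ∃ t : ℂ, v - t • e ∈ W := by
  have he' : (Submodule.Quotient.mk e : V ⧸ W) ≠ 0 := by
    rwa [Ne, Submodule.Quotient.mk_eq_zero]
  obtain ⟨t, ht⟩ := (finrank_eq_one_iff_of_nonzero' _ he').mp hW (Submodule.Quotient.mk v)
  refine ⟨t, (Submodule.Quotient.eq W).mp ?_⟩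
  rw [← ht, Submodule.Quotient.mk_smul]

theorem exists_eq_mul_of_vanish_on_hyperplane {W : Submodule ℂ V}
    (hW : Module.finrank ℂ (V ⧸ W) = 1) {φ ψ : V →ₗ[ℂ] ℂ} (hψ : ψ ≠ 0)
    (hφW : ∀ w ∈ W, φ w = 0) (hψW : ∀ w ∈ W, ψ w = 0) : ∃ c : ℂ, ∀ v, φ v = c * ψ v := by
  obtain ⟨e, he⟩ : ∃ e, ψ e = 1 := LinearMap.surjective hψ 1
  have heW : e ∉ W := fun h => by simp [hψW e h] at he
  refine ⟨φ e, fun v => ?_⟩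
  obtain ⟨t, ht⟩ := exists_sub_smul_mem_of_finrank_quotient_eq_one hW heW v
  have h₁ := hφW _ ht
  have h₂ := hψW _ ht
  simp only [map_sub, map_smul, smul_eq_mul, he] at h₁ h₂
  linear_combination h₁ - φ e * h₂

theorem mem_hyperplane_of_apply_eq_zero {W : Submodule ℂ V}
    (hW : Module.finrank ℂ (V ⧸ W) = 1) {ψ : V →ₗ[ℂ] ℂ} (hψ : ψ ≠ 0)
    (hψW : ∀ w ∈ W, ψ w = 0) {v : V} (hv : ψ v = 0) : v ∈ W := by
  by_contra hvW
  refine hψ (LinearMap.ext fun x => ?_)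
  obtain ⟨t, ht⟩ := exists_sub_smul_mem_of_finrank_quotient_eq_one hW hvW x
  simpa [hv] using hψW _ ht

theorem hyperplane_eq_of_le {U W : Submodule ℂ V} (hU : Module.finrank ℂ (V ⧸ U) = 1)
    (hW : Module.finrank ℂ (V ⧸ W) = 1) (h : U ≤ W) : U = W := by
  refine le_antisymm h fun w hw => ?_
  by_contra hwU
  have hWtop : W = ⊤ := eq_top_iff.mpr fun x _ => by
    obtain ⟨t, ht⟩ := exists_sub_smul_mem_of_finrank_quotient_eq_one hU hwU x
    simpa using W.add_mem (h ht) (W.smul_mem t hw)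
  subst hWtop
  have : Subsingleton (V ⧸ (⊤ : Submodule ℂ V)) := inferInstance
  rw [Module.finrank_zero_of_subsingleton] at hW
  exact zero_ne_one hW

/-- A polynomial function vanishing on finitely many distinct hyperplanes is divisible by the
product of linear functionals defining them. -/
theorem polyFunctions.exists_eq_prod_mul (S : Finset (Submodule ℂ V))
    (ℓ : Submodule ℂ V → (V →ₗ[ℂ] ℂ)) (hS : ∀ U ∈ S, Module.finrank ℂ (V ⧸ U) = 1)
    (hℓ0 : ∀ U ∈ S, ℓ U ≠ 0) (hℓv : ∀ U ∈ S, ∀ v ∈ U, ℓ U v = 0) {p : V → ℂ}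
    (hp : p ∈ polyFunctions V) (h : ∀ U ∈ S, ∀ v ∈ U, p v = 0) :
    ∃ q ∈ polyFunctions V, ∀ v, p v = (∏ U ∈ S, ℓ U v) * q v := by
  classical
  induction S using Finset.induction_on generalizing p with
  | empty => exact ⟨p, hp, fun v => by simp⟩
  | insert U S hUS ih =>
    simp only [Finset.forall_mem_insert] at hS hℓ0 hℓv h
    obtain ⟨q, hq, hpq⟩ := exists_eq_linear_mul hp hℓ0.1 fun v hv =>
      h.1 v (mem_hyperplane_of_apply_eq_zero hS.1 hℓ0.1 hℓv.1 hv)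
    have hqS : ∀ U' ∈ S, ∀ v ∈ U', q v = 0 := by
      intro U' hU'
      obtain ⟨a, haU', haU⟩ : ∃ a ∈ U', a ∉ U := by
        by_contra! hle
        exact hUS (hyperplane_eq_of_le (hS.2 U' hU') hS.1 hle ▸ hU')
      refine eqOn_zero_of_mul_eqOn_zero (linear_mem (ℓ U)) hq
        (fun w hw => by rw [← hpq, h.2 U' hU' w hw]) haU' fun h0 => haU ?_
      exact mem_hyperplane_of_apply_eq_zero hS.1 hℓ0.1 hℓv.1 h0
    obtain ⟨s, hs, hqs⟩ := ih hS.2 hℓ0.2 hℓv.2 hq hqS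
    exact ⟨s, hs, fun v => by rw [hpq, hqs, Finset.prod_insert hUS, mul_assoc]⟩

end Hyperplane

section SemiInvariant

variable {V : Type*} [AddCommGroup V] [Module ℂ V]

/-- The linear automorphisms under which a function is invariant. -/
def invarianceSubgroup (p : V → ℂ) : Subgroup (V ≃ₗ[ℂ] V) where
  carrier := {g | ∀ v, p (g v) = p v}
  one_mem' _ := rfl
  mul_mem' {g h} hg hh v := by rw [LinearEquiv.mul_apply, hg, hh]
  inv_mem' {g} hg v := by
    rw [← hg, ← LinearEquiv.mul_apply, mul_inv_cancel, LinearEquiv.coe_one, id]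

/-- A function that each element of `H` rescales by a constant. -/
def IsSemiInvariant (H : Subgroup (V ≃ₗ[ℂ] V)) (p : V → ℂ) : Prop :=
  ∀ h ∈ H, ∃ c : ℂ, ∀ v, p (h v) = c * p v

theorem IsSemiInvariant.commutator_le {H : Subgroup (V ≃ₗ[ℂ] V)} {p : V → ℂ}
    (hp : IsSemiInvariant H p) : ⁅H, H⁆ ≤ invarianceSubgroup p := by
  rw [Subgroup.commutator_le]
  intro g₁ h₁ g₂ h₂ v
  obtain ⟨c₁, hc₁⟩ := hp g₁ h₁
  obtain ⟨c₂, hc₂⟩ := hp g₂ h₂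
  have hcomm : ∀ w, p (g₁ (g₂ w)) = p (g₂ (g₁ w)) := fun w => by
    rw [hc₁, hc₂, hc₂, hc₁, mul_left_comm]
  have hv : g₂ (g₁ (g₁⁻¹ (g₂⁻¹ v))) = v := by
    simp only [← LinearEquiv.mul_apply]
    simp
  rw [commutatorElement_def]
  simp only [LinearEquiv.mul_apply]
  rw [hcomm, hv]

/-- The product of linear functionals defining the hyperplanes in an `H`-stable finite set is
semi-invariant. -/
theorem isSemiInvariant_prod_linear {H : Subgroup (V ≃ₗ[ℂ] V)} {S : Finset (Submodule ℂ V)}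
    (hS : ∀ U ∈ S, Module.finrank ℂ (V ⧸ U) = 1)
    (hstable : ∀ h ∈ H, ∀ U ∈ S, U.map (h : V →ₗ[ℂ] V) ∈ S)
    {ℓ : Submodule ℂ V → (V →ₗ[ℂ] ℂ)} (hℓ0 : ∀ U ∈ S, ℓ U ≠ 0)
    (hℓv : ∀ U ∈ S, ∀ v ∈ U, ℓ U v = 0) :
    IsSemiInvariant H fun v => ∏ U ∈ S, ℓ U v := by
  intro h hh
  have hmap : ∀ U ∈ S, ∃ c : ℂ, ∀ v, ℓ (U.map (h : V →ₗ[ℂ] V)) (h v) = c * ℓ U v := by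
    intro U hU
    exact exists_eq_mul_of_vanish_on_hyperplane
      (φ := (ℓ (U.map (h : V →ₗ[ℂ] V))).comp (h : V →ₗ[ℂ] V)) (hS U hU) (hℓ0 U hU)
      (fun w hw => hℓv _ (hstable h hh U hU) _ (Submodule.mem_map_of_mem hw)) (hℓv U hU)
  choose! c hc using hmap
  refine ⟨∏ U ∈ S, c U, fun v => ?_⟩
  have hinj : Function.Injective (Submodule.map (h : V →ₗ[ℂ] V)) :=
    Submodule.map_injective_of_injective h.injective
  have hbij : ∏ U ∈ S, ℓ (U.map (h : V →ₗ[ℂ] V)) (h v) = ∏ U ∈ S, ℓ U (h v) :=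
    Finset.prod_nbij (Submodule.map (h : V →ₗ[ℂ] V)) (fun U hU => hstable h hh U hU)
      hinj.injOn (Finset.surjOn_of_injOn_of_card_le _ (fun U hU => hstable h hh U hU)
        hinj.injOn le_rfl) (fun _ _ => rfl)
  beta_reduce
  rw [← hbij, ← Finset.prod_mul_distrib]
  exact Finset.prod_congr rfl fun U hU => hc U hU v

/-- A polynomial quotient of semi-invariant polynomial functions is semi-invariant. -/
theorem IsSemiInvariant.of_mul {H : Subgroup (V ≃ₗ[ℂ] V)} {f p q : V → ℂ}
    (hf : IsSemiInvariant H f) (hp : IsSemiInvariant H p) (hfm : f ∈ polyFunctions V)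
    (hqm : q ∈ polyFunctions V) (hpq : ∀ v, p v = f v * q v) {a : V} (ha : f a ≠ 0) :
    IsSemiInvariant H q := by
  intro h hh
  obtain ⟨d, hd⟩ := hf h hh
  obtain ⟨c, hc⟩ := hp h hh
  have hd0 : d ≠ 0 := by
    rintro rfl
    apply ha
    simpa using hd (h.symm a)
  have hm : (fun v => d * q (h v) - c * q v) ∈ polyFunctions V :=
    sub_mem ((polyFunctions V).smul_mem
      (polyFunctions.comp_linear_mem hqm (h : V →ₗ[ℂ] V)) d)
      ((polyFunctions V).smul_mem hqm c)
  have hzero := polyFunctions.eqOn_zero_of_mul_eqOn_zero hfm hm (W := ⊤) (fun v _ => by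
    have h1 := hc v
    rw [hpq, hpq, hd] at h1
    linear_combination h1) (Submodule.mem_top (x := a)) ha
  refine ⟨c / d, fun v => ?_⟩
  have := hzero v Submodule.mem_top
  field_simp
  linear_combination this

/-- The sum of all characters of a finite commutative group, evaluated at `a`, vanishes unless
`a = 1`. -/
theorem sum_characters_apply_eq_zero {A : Type*} [CommGroup A] [Finite A] [Fintype (A →* ℂˣ)]
    {a : A} (ha : a ≠ 1) : ∑ χ : A →* ℂˣ, (χ a : ℂ) = 0 := by
  obtain ⟨ψ, hψ⟩ := CommGroup.exists_apply_ne_one_of_hasEnoughRootsOfUnity A ℂ ha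
  have h : (ψ a : ℂ) * ∑ χ : A →* ℂˣ, (χ a : ℂ) = ∑ χ : A →* ℂˣ, (χ a : ℂ) := by
    rw [Finset.mul_sum]
    exact Fintype.sum_equiv (Equiv.mulLeft ψ) _ _ fun χ => by simp
  have h' : ((ψ a : ℂ) - 1) * ∑ χ : A →* ℂˣ, (χ a : ℂ) = 0 := by linear_combination h
  refine (mul_eq_zero.mp h').resolve_left fun h0 => hψ ?_
  exact Units.ext (sub_eq_zero.mp h0)

/-- A subspace of functions containing all semi-invariant polynomial functions of a finite group
contains all polynomial functions invariant under its commutator subgroup. -/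
theorem mem_of_commutator_invariant (H : Subgroup (V ≃ₗ[ℂ] V)) [Finite H]
    (S : Submodule ℂ (V → ℂ))
    (hS : ∀ p ∈ polyFunctions V, IsSemiInvariant H p → p ∈ S) {p : V → ℂ}
    (hp : p ∈ polyFunctions V) (hinv : ∀ g ∈ ⁅H, H⁆, ∀ v, p (g v) = p v) : p ∈ S := by
  classical
  have : Fintype H := Fintype.ofFinite H
  have : Finite (Abelianization H) := Quotient.finite _
  have : Fintype (Abelianization H →* ℂˣ) :=
    @Fintype.ofFinite _ (Nat.finite_of_card_ne_zero (by
      rw [CommGroup.card_monoidHom_of_hasEnoughRootsOfUnity]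
      exact Nat.card_pos.ne'))
  let P (χ : Abelianization H →* ℂˣ) : V → ℂ := fun v =>
    ∑ h : H, (χ (Abelianization.of h⁻¹) : ℂ) * p ((h : V ≃ₗ[ℂ] V) v)
  have hPmem (χ) : P χ ∈ polyFunctions V := by
    have : P χ = ∑ h : H, (χ (Abelianization.of h⁻¹) : ℂ) •
        fun v => p ((h : V ≃ₗ[ℂ] V) v) := by
      ext v
      simp [P]
    rw [this]
    exact sum_mem fun h _ => (polyFunctions V).smul_mem
      (polyFunctions.comp_linear_mem hp ((h : V ≃ₗ[ℂ] V) : V →ₗ[ℂ] V)) _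
  have hPsemi (χ) : IsSemiInvariant H (P χ) := by
    intro g hg
    refine ⟨χ (Abelianization.of ⟨g, hg⟩), fun v => ?_⟩
    simp only [P, Finset.mul_sum]
    refine Fintype.sum_equiv (Equiv.mulRight ⟨g, hg⟩) _ _ fun h => ?_
    simp only [Equiv.coe_mulRight, Subgroup.coe_mul, LinearEquiv.mul_apply, ← mul_assoc,
      ← Units.val_mul, ← map_mul]
    congr 4
    simp
  have hsum : ∑ χ, P χ =
      ((Fintype.card (Abelianization H →* ℂˣ) : ℂ) * Nat.card (commutator H)) • p := by
    ext v
    have hterm : ∀ h : H, ∑ χ : Abelianization H →* ℂˣ,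
        (χ (Abelianization.of h⁻¹) : ℂ) * p ((h : V ≃ₗ[ℂ] V) v) =
        if h ∈ commutator H then (Fintype.card (Abelianization H →* ℂˣ) : ℂ) * p v else 0 := by
      intro h
      have hker : Abelianization.of h⁻¹ = 1 ↔ h ∈ commutator H := by
        rw [← Abelianization.ker_of, MonoidHom.mem_ker, map_inv, inv_eq_one]
      rw [← Finset.sum_mul]
      split_ifs with hh
      · have hh' : (h : V ≃ₗ[ℂ] V) ∈ ⁅H, H⁆ := by
          rw [← Subgroup.map_subtype_commutator]
          exact Subgroup.mem_map_of_mem _ hh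
        rw [hker.mpr hh, hinv _ hh']
        simp
      · rw [sum_characters_apply_eq_zero (mt hker.mp hh), zero_mul]
    simp only [Finset.sum_apply, P]
    rw [Finset.sum_comm, Finset.sum_congr rfl fun h _ => hterm h, ← Finset.sum_filter,
      Finset.sum_const, Nat.card_eq_fintype_card, Fintype.card_subtype]
    simp only [nsmul_eq_mul, Pi.smul_apply, smul_eq_mul]
    ring
  have hc : (Fintype.card (Abelianization H →* ℂˣ) : ℂ) * Nat.card (commutator H) ≠ 0 := by
    refine mul_ne_zero (Nat.cast_ne_zero.mpr Fintype.card_ne_zero)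
      (Nat.cast_ne_zero.mpr Nat.card_pos.ne')
  have hmem := S.smul_mem ((Fintype.card (Abelianization H →* ℂˣ) : ℂ) *
    Nat.card (commutator H))⁻¹ (S.sum_mem fun χ (_ : χ ∈ Finset.univ) =>
      hS _ (hPmem χ) (hPsemi χ))
  rwa [hsum, inv_smul_smul₀ hc] at hmem

end SemiInvariant


/-- Let `V` be a finite-dimensional complex vector space and `H` a finite subgroup of `GL(V)`
generated by pseudoreflections, with commutator subgroup `H' = [H,H]`. Let `O_1, …, O_k` be
the `H`-orbits of the reflecting hyperplanes of `H`, and `f_i` the product of chosen nonzero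
linear functionals vanishing on the hyperplanes in `O_i`. Then the ring of `H'`-invariant
polynomial functions on `V` is generated as an algebra by the `H`-invariant polynomial
functions together with `f_1, …, f_k`. -/
theorem commutator_invariants_generated_by_invariants_and_orbit_products
    {V : Type*} [AddCommGroup V] [Module ℂ V] [FiniteDimensional ℂ V]
    (H : Subgroup (V ≃ₗ[ℂ] V)) [Finite H]
    (hgen : H = Subgroup.closure {g : V ≃ₗ[ℂ] V | g ∈ H ∧ g ≠ 1 ∧
      ∃ W : Submodule ℂ V, Module.finrank ℂ (V ⧸ W) = 1 ∧ ∀ w ∈ W, g w = w})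
    (k : ℕ) (O : Fin k → Finset (Submodule ℂ V))
    -- each `O i` is the `H`-orbit of some reflecting hyperplane of `H`
    (hOorb : ∀ i, ∃ W : Submodule ℂ V,
      (Module.finrank ℂ (V ⧸ W) = 1 ∧ ∃ g ∈ H, g ≠ 1 ∧ ∀ w ∈ W, g w = w) ∧
      ∀ U, U ∈ O i ↔ ∃ h ∈ H, U = W.map (h : V →ₗ[ℂ] V))
    -- the `O i` exhaust the reflecting hyperplanes, and are pairwise distinct orbits
    (hcover : ∀ U : Submodule ℂ V, Module.finrank ℂ (V ⧸ U) = 1 →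
      (∃ g ∈ H, g ≠ 1 ∧ ∀ w ∈ U, g w = w) → ∃ i, U ∈ O i)
    (hdistinct : Function.Injective O)
    (ℓ : Submodule ℂ V → (V →ₗ[ℂ] ℂ))
    (hℓ0 : ∀ i, ∀ U ∈ O i, ℓ U ≠ 0)
    (hℓv : ∀ i, ∀ U ∈ O i, ∀ v ∈ U, ℓ U v = 0)
    (f : Fin k → (V → ℂ)) (hf : ∀ i, f i = fun v => ∏ U ∈ O i, ℓ U v) :
    {p : V → ℂ | p ∈ Algebra.adjoin ℂ {q : V → ℂ | ∃ φ : V →ₗ[ℂ] ℂ, q = ⇑φ} ∧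
        ∀ g ∈ ⁅H, H⁆, ∀ v : V, p (g v) = p v} =
      ↑(Algebra.adjoin ℂ
        ({p : V → ℂ | p ∈ Algebra.adjoin ℂ {q : V → ℂ | ∃ φ : V →ₗ[ℂ] ℂ, q = ⇑φ} ∧
            ∀ g ∈ H, ∀ v : V, p (g v) = p v} ∪ Set.range f)) := by
  have hfin : ∀ i, ∀ U ∈ O i, Module.finrank ℂ (V ⧸ U) = 1 := by
    intro i U hU
    obtain ⟨W, ⟨hW, -⟩, hmem⟩ := hOorb i
    obtain ⟨h, -, rfl⟩ := (hmem U).mp hU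
    rw [← hW]
    exact (Submodule.Quotient.equiv W _ h rfl).finrank_eq.symm
  have hstable : ∀ i, ∀ h ∈ H, ∀ U ∈ O i, U.map (h : V →ₗ[ℂ] V) ∈ O i := by
    intro i h hh U hU
    obtain ⟨W, -, hmem⟩ := hOorb i
    obtain ⟨g, hg, rfl⟩ := (hmem U).mp hU
    exact (hmem _).mpr ⟨h * g, H.mul_mem hh hg, (Submodule.map_comp _ _ W).symm⟩
  have htrans : ∀ i, ∀ U ∈ O i, ∀ U' ∈ O i, ∃ h ∈ H, ∀ v ∈ U', h v ∈ U := by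
    intro i U hU U' hU'
    obtain ⟨W, -, hmem⟩ := hOorb i
    obtain ⟨g, hg, rfl⟩ := (hmem U).mp hU
    obtain ⟨g', hg', rfl⟩ := (hmem U').mp hU'
    refine ⟨g * g'⁻¹, H.mul_mem hg (H.inv_mem hg'), ?_⟩
    rintro _ ⟨w, hw, rfl⟩
    exact ⟨w, hw, congrArg g (g'.symm_apply_apply w).symm⟩
  have hfsemi : ∀ i, IsSemiInvariant H (f i) := fun i => by
    rw [hf]
    exact isSemiInvariant_prod_linear (hfin i) (hstable i) (hℓ0 i) (hℓv i)
  have hfpoly : ∀ i, f i ∈ polyFunctions V := fun i => by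
    have : f i = ∏ U ∈ O i, ⇑(ℓ U) := by
      ext v
      simp [hf]
    rw [this]
    exact prod_mem fun U _ => polyFunctions.linear_mem _
  have hcomm : ⁅H, H⁆ ≤ H := Subgroup.commutator_le.mpr fun g₁ h₁ g₂ h₂ =>
    H.mul_mem (H.mul_mem (H.mul_mem h₁ h₂) (H.inv_mem h₁)) (H.inv_mem h₂)
  apply Set.Subset.antisymm
  · rintro p ⟨hp, hinv⟩
    refine mem_of_commutator_invariant H (Subalgebra.toSubmodule (Algebra.adjoin ℂ
      ({p : V → ℂ | p ∈ polyFunctions V ∧ ∀ g ∈ H, ∀ v : V, p (g v) = p v} ∪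
        Set.range f))) ?_ hp hinv
    clear hinv hp p
    intro p hp hsemi
    by_cases hp0 : p = 0
    · exact hp0 ▸ zero_mem _
    obtain ⟨a, ha⟩ := Function.ne_iff.mp hp0
    obtain ⟨r, hr⟩ := polyFunctions.exists_polynomial_on_line hp 0 a
    clear hp0
    -- induction on the degree of `p` along the line through `0` and `a`
    induction hn : r.natDegree using Nat.strong_induction_on generalizing p r with
    | _ n ih =>
    by_cases hinv : ∀ g ∈ H, ∀ v, p (g v) = p v
    · exact Algebra.subset_adjoin (Or.inl ⟨hp, hinv⟩)
    obtain ⟨s, hsH, hs1, W, hW, hsW, hsp⟩ : ∃ s ∈ H, s ≠ 1 ∧ ∃ W : Submodule ℂ V,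
        Module.finrank ℂ (V ⧸ W) = 1 ∧ (∀ w ∈ W, s w = w) ∧ ¬ ∀ v, p (s v) = p v := by
      by_contra! hcon
      have hle : H ≤ invarianceSubgroup p := by
        rw [hgen, Subgroup.closure_le]
        rintro g ⟨hg, hg1, W, hW, hgW⟩
        exact hcon g hg hg1 W hW hgW
      exact hinv fun g hg => hle hg
    obtain ⟨i, hWi⟩ := hcover W hW ⟨s, hsH, hs1, hsW⟩
    obtain ⟨c, hc⟩ := hsemi s hsH
    have hpW : ∀ w ∈ W, p w = 0 := by
      intro w hw
      have h1 := hc w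
      rw [hsW w hw] at h1
      have hc1 : 1 - c ≠ 0 := by
        intro h0
        refine hsp fun v => ?_
        rw [hc, ← sub_eq_zero.mp h0, one_mul]
      refine (mul_eq_zero.mp ?_).resolve_left hc1
      linear_combination h1
    have hpO : ∀ U ∈ O i, ∀ v ∈ U, p v = 0 := by
      intro U hU v hv
      obtain ⟨h, hh, hUW⟩ := htrans i W hWi U hU
      obtain ⟨d, hd⟩ := hsemi h⁻¹ (H.inv_mem hh)
      have h2 := hd (h v)
      rwa [hpW _ (hUW v hv), mul_zero, show h⁻¹ (h v) = v from h.symm_apply_apply v] at h2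
    obtain ⟨q, hq, hpq⟩ := polyFunctions.exists_eq_prod_mul (O i) ℓ (hfin i) (hℓ0 i)
      (hℓv i) hp hpO
    have hpf : ∀ v, p v = f i v * q v := fun v => by rw [hpq, hf]
    have hne : f i a * q a ≠ 0 := by
      rw [← hpf]
      exact ha
    have hfa := left_ne_zero_of_mul hne
    have hqa := right_ne_zero_of_mul hne
    obtain ⟨u, hu⟩ := polyFunctions.exists_polynomial_on_line hq 0 a
    have hru : r = Polynomial.C (f i a) * Polynomial.X ^ (O i).card * u :=
      Polynomial.funext fun t => by
        have hft : f i (t • a) = f i a * t ^ (O i).card := by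
          simp [hf, Finset.prod_mul_distrib, mul_comm]
        simp [hr, hu, hpf, hft]
    have hu0 : u ≠ 0 := by
      rintro rfl
      exact hqa (by simpa using (hu 1).symm)
    have hdeg : u.natDegree < n := by
      rw [← hn, hru, Polynomial.natDegree_mul (by simp [hfa]) hu0,
        Polynomial.natDegree_C_mul_X_pow _ _ hfa]
      have := Finset.card_pos.mpr ⟨W, hWi⟩
      lia
    have hqmem := ih _ hdeg q hq ((hfsemi i).of_mul hsemi (hfpoly i) hq hpf hfa) hqa u hu rfl
    rw [show p = f i * q from funext hpf]
    exact Subalgebra.mul_mem _ (Algebra.subset_adjoin (Or.inr ⟨i, rfl⟩)) hqmem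
  · intro p hp
    induction hp using Algebra.adjoin_induction with
    | mem x hx =>
      rcases hx with ⟨hx, hinv⟩ | ⟨i, rfl⟩
      · exact ⟨hx, fun g hg => hinv g (hcomm hg)⟩
      · exact ⟨hfpoly i, fun g hg => (hfsemi i).commutator_le hg⟩
    | algebraMap r => exact ⟨(polyFunctions V).algebraMap_mem r, fun _ _ _ => rfl⟩
    | add x y _ _ hx hy =>
      exact ⟨add_mem hx.1 hy.1, fun g hg v => by simp [hx.2 g hg v, hy.2 g hg v]⟩
    | mul x y _ _ hx hy =>
      exact ⟨mul_mem hx.1 hy.1, fun g hg v => by simp [hx.2 g hg v, hy.2 g hg v]⟩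
end

section
/- Let V be a finite-dimensional complex vector space and H a finite subgroup of GL(V) generated by pseudoreflections. Let O_1, …, O_k be the H-orbits of the reflecting hyperplanes of H, choose a hyperplane W_i ∈ O_i for each i, and let e_i be the order of the pointwise stabilizer {h ∈ H : h fixes W_i pointwise}. Then the abelianization H/[H,H] is isomorphic to the product of cyclic groups ℤ/e_1ℤ × ⋯ × ℤ/e_kℤ. -/
/-- If a finite family of subgroups generates the abelianization of `G`, and is separated by
characters of `G` indexed by the same family, then the abelianization is their product. -/
theorem Abelianization.nonempty_mulEquiv_pi {G A ι : Type*} [Group G] [CommGroup A] [Fintype ι]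
    (C : ι → Subgroup G) (χ : ι → G →* A)
    (hfaithful : ∀ i, ∀ g ∈ C i, χ i g = 1 → g = 1)
    (htrivial : ∀ i j, i ≠ j → ∀ g ∈ C j, χ i g = 1)
    (hgen : ⨆ i, (C i).map (Abelianization.of (G := G)) = ⊤) :
    Nonempty (Abelianization G ≃* ((i : ι) → C i)) := by
  classical
  let Φ : ((i : ι) → C i) →* Abelianization G :=
    { toFun := fun c => ∏ i, Abelianization.of (c i : G)
      map_one' := by simp
      map_mul' := fun c d => by simp [Finset.prod_mul_distrib] }
  have hinj : Function.Injective Φ := by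
    rw [injective_iff_map_eq_one]
    intro c hc
    funext i
    have h : Abelianization.lift (χ i) (Φ c) = χ i (c i) := by
      change Abelianization.lift (χ i) (∏ j, Abelianization.of (c j : G)) = _
      rw [map_prod, Finset.prod_eq_single i]
      · simp
      · intro j _ hj
        simpa using htrivial i j hj.symm _ (c j).2
      · simp
    rw [hc, map_one] at h
    exact Subtype.ext (hfaithful i _ (c i).2 h.symm)
  have hsurj : Function.Surjective Φ := by
    rw [← MonoidHom.range_eq_top, eq_top_iff, ← hgen, iSup_le_iff]
    rintro i _ ⟨g, hg, rfl⟩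
    refine ⟨Pi.mulSingle i ⟨g, hg⟩, ?_⟩
    change ∏ j, Abelianization.of ((Pi.mulSingle i ⟨g, hg⟩ : (i : ι) → C i) j : G) = _
    rw [Finset.prod_eq_single i]
    · simp
    · intro j _ hj
      simp [Pi.mulSingle_eq_of_ne hj]
    · simp
  exact ⟨(MulEquiv.ofBijective Φ ⟨hinj, hsurj⟩).symm⟩

/-- Two linear functionals with the same kernel are proportional. -/
theorem LinearMap.exists_ne_zero_smul_eq_of_ker_eq {K V : Type*} [Field K] [AddCommGroup V]
    [Module K V] {f g : V →ₗ[K] K} (h : LinearMap.ker f = LinearMap.ker g) :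
    ∃ c : K, c ≠ 0 ∧ f = c • g := by
  by_cases hg : g = 0
  · refine ⟨1, one_ne_zero, ?_⟩
    rw [hg, LinearMap.ker_zero, LinearMap.ker_eq_top] at h
    simp [h, hg]
  · have hf : f ≠ 0 := by
      rintro rfl
      exact hg (LinearMap.ker_eq_top.1 (h.symm.trans LinearMap.ker_zero))
    have hmem : f ∈ Submodule.span K (Set.range fun _ : Unit => g) :=
      mem_span_of_iInf_ker_le_ker (by simp [h])
    rw [Set.range_const, Submodule.mem_span_singleton] at hmem
    obtain ⟨c, rfl⟩ := hmem
    exact ⟨c, fun hc => hf (by simp [hc]), rfl⟩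

/-- A subspace over an infinite field contains a vector outside any finite collection of
subspaces not containing it. -/
theorem Subspace.exists_mem_forall_notMem {K V : Type*} [Field K] [Infinite K] [AddCommGroup V]
    [Module K V] (U : Submodule K V) (s : Finset (Submodule K V)) (hs : ∀ P ∈ s, ¬ U ≤ P) :
    ∃ u ∈ U, ∀ P ∈ s, u ∉ P := by
  by_contra! hcon
  obtain ⟨P, hP⟩ := Subspace.exists_eq_top_of_iUnion_eq_univ
    (p := fun P : s => (P : Submodule K V).comap U.subtype) <| by
      rw [Set.eq_univ_iff_forall]
      intro u
      obtain ⟨P, hP, hu⟩ := hcon u u.2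
      exact Set.mem_iUnion.2 ⟨⟨P, hP⟩, hu⟩
  exact hs P P.2 (Submodule.comap_subtype_eq_top.1 hP)

/-- A linear automorphism of finite order fixing pointwise the kernel of a functional, and
preserving that functional, is trivial. -/
theorem LinearEquiv.eq_one_of_fixes_ker {K V : Type*} [Field K] [CharZero K] [AddCommGroup V]
    [Module K V] {g : V ≃ₗ[K] V} (hg : IsOfFinOrder g) (f : V →ₗ[K] K)
    (hker : ∀ w ∈ LinearMap.ker f, g w = w) (hf : ∀ v, f (g v) = f v) : g = 1 := by
  obtain ⟨n, hn, hgn⟩ := isOfFinOrder_iff_pow_eq_one.1 hg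
  ext v
  have hfix : g (g v - v) = g v - v := hker _ (by simp [hf])
  have hpow : ∀ m : ℕ, (g ^ m) v = v + (m : K) • (g v - v) := by
    intro m
    induction m with
    | zero => simp
    | succ m ih =>
      rw [pow_succ', LinearEquiv.mul_apply, ih, map_add, map_smul, hfix]
      push_cast
      module
  have h := hpow n
  rw [hgn, LinearEquiv.coe_one, id, left_eq_add, smul_eq_zero] at h
  have h' := h.resolve_left (by exact_mod_cast hn.ne')
  simpa using sub_eq_zero.1 h'

section ProductOfFunctionals

variable {K V : Type*} [Field K] [AddCommGroup V] [Module K V]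
  {s : Finset (Submodule K V)} {α : Submodule K V → V →ₗ[K] K}

/-- The product of linear functionals defining a finite set of hyperplanes is a semi-invariant
of every linear automorphism permuting the set. -/
theorem LinearEquiv.exists_prod_apply_eq_mul (hα : ∀ U ∈ s, LinearMap.ker (α U) = U)
    (g : V ≃ₗ[K] V) (hg : ∀ U ∈ s, U.comap (g : V →ₗ[K] V) ∈ s) :
    ∃ c : K, c ≠ 0 ∧ ∀ v, ∏ U ∈ s, α U (g v) = c * ∏ U ∈ s, α U v := by
  have hprop : ∀ U : s, ∃ c : K, c ≠ 0 ∧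
      (α U).comp (g : V →ₗ[K] V) = c • α ((U : Submodule K V).comap (g : V →ₗ[K] V)) := by
    rintro ⟨U, hU⟩
    refine LinearMap.exists_ne_zero_smul_eq_of_ker_eq ?_
    rw [hα _ (hg U hU), LinearMap.ker_comp, hα U hU]
  choose c hc hcomp using hprop
  have hbij : Function.Bijective
      fun U : s => (⟨(U : Submodule K V).comap (g : V →ₗ[K] V), hg U U.2⟩ : s) := by
    refine Finite.injective_iff_bijective.1 fun U U' h => Subtype.ext ?_
    exact Submodule.comap_injective_of_surjective g.surjective (congrArg Subtype.val h)
  refine ⟨∏ U, c U, Finset.prod_ne_zero_iff.2 fun U _ => hc U, fun v => ?_⟩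
  rw [← Finset.prod_coe_sort s (fun U => α U (g v)), ← Finset.prod_coe_sort s (fun U => α U v),
    ← hbij.prod_comp (fun U : s => α U v), ← Finset.prod_mul_distrib]
  exact Finset.prod_congr rfl fun U _ => LinearMap.congr_fun (hcomp U) v

/-- The product of linear functionals defining a finite set of hyperplanes is invariant under
an automorphism permuting the set and fixing pointwise a subspace contained in none of them. -/
theorem LinearEquiv.prod_apply_eq_of_fixes [Infinite K]
    (hα : ∀ U ∈ s, LinearMap.ker (α U) = U)
    {g : V ≃ₗ[K] V} (hg : ∀ U ∈ s, U.comap (g : V →ₗ[K] V) ∈ s) {P : Submodule K V}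
    (hP : ∀ U ∈ s, ¬ P ≤ U) (hfix : ∀ w ∈ P, g w = w) (v : V) :
    ∏ U ∈ s, α U (g v) = ∏ U ∈ s, α U v := by
  obtain ⟨c, -, hc⟩ := LinearEquiv.exists_prod_apply_eq_mul hα g hg
  obtain ⟨u, hu, hus⟩ := Subspace.exists_mem_forall_notMem P s hP
  have hne : ∏ U ∈ s, α U u ≠ 0 := Finset.prod_ne_zero_iff.2 fun U hU h0 =>
    hus U hU (hα U hU ▸ LinearMap.mem_ker.2 h0)
  have h := hc u
  rw [hfix u hu] at h
  rw [hc v, mul_right_cancel₀ hne ((one_mul _).trans h).symm, one_mul]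

/-- If an automorphism of finite order fixes pointwise a hyperplane of a finite set it permutes,
and leaves the product of the defining functionals invariant, then it is trivial. -/
theorem LinearEquiv.eq_one_of_prod_apply_eq [CharZero K]
    (hα : ∀ U ∈ s, LinearMap.ker (α U) = U) (hs : ∀ U ∈ s, IsCoatom U)
    {g : V ≃ₗ[K] V} (hfin : IsOfFinOrder g) (hg : ∀ U ∈ s, U.comap (g : V →ₗ[K] V) ∈ s)
    {P : Submodule K V} (hP : P ∈ s) (hfix : ∀ w ∈ P, g w = w)
    (hinv : ∀ v, ∏ U ∈ s, α U (g v) = ∏ U ∈ s, α U v) : g = 1 := by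
  classical
  have : Infinite K := CharZero.infinite K
  have hcomapP : P.comap (g : V →ₗ[K] V) = P := by
    ext v
    refine ⟨fun hv => ?_, fun hv => by simpa [hfix v hv] using hv⟩
    have h := g.injective (hfix (g v) hv)
    exact h ▸ hv
  have herase : ∀ U ∈ s.erase P, U.comap (g : V →ₗ[K] V) ∈ s.erase P := by
    intro U hU
    obtain ⟨hne, hUs⟩ := Finset.mem_erase.1 hU
    refine Finset.mem_erase.2 ⟨fun h => hne ?_, hg U hUs⟩
    exact Submodule.comap_injective_of_surjective g.surjective (h.trans hcomapP.symm)
  have hαerase : ∀ U ∈ s.erase P, LinearMap.ker (α U) = U :=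
    fun U hU => hα U (Finset.mem_of_mem_erase hU)
  have hle : ∀ Q : Submodule K V, (Q = P ∨ Q = ⊤) → ∀ U ∈ s.erase P, ¬ Q ≤ U := by
    rintro Q hQ U hU hQU
    obtain ⟨hne, hUs⟩ := Finset.mem_erase.1 hU
    rcases hQ with rfl | rfl
    · exact hne (((hs Q hP).le_iff.1 hQU).resolve_left (hs U hUs).1)
    · exact (hs U hUs).1 (top_le_iff.1 hQU)
  have hprod := LinearEquiv.prod_apply_eq_of_fixes hαerase herase (hle P (Or.inl rfl)) hfix
  obtain ⟨c, -, hc⟩ := LinearMap.exists_ne_zero_smul_eq_of_ker_eq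
    (f := (α P).comp (g : V →ₗ[K] V)) (g := α P) (by rw [LinearMap.ker_comp, hα P hP, hcomapP])
  have hcv : ∀ v, α P (g v) = c * α P v := fun v => LinearMap.congr_fun hc v
  obtain ⟨u, -, hu⟩ := Subspace.exists_mem_forall_notMem ⊤ s
    fun U hU h => (hs U hU).1 (top_le_iff.1 h)
  have hne : ∏ U ∈ s, α U u ≠ 0 := Finset.prod_ne_zero_iff.2 fun U hU h0 =>
    hu U hU (hα U hU ▸ LinearMap.mem_ker.2 h0)
  have hc1 : c = 1 := by
    have h := hinv u
    rw [← Finset.mul_prod_erase s _ hP, hprod u, hcv u, mul_assoc,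
      Finset.mul_prod_erase s (fun U => α U u) hP] at h
    exact mul_right_cancel₀ hne (h.trans (one_mul _).symm)
  refine LinearEquiv.eq_one_of_fixes_ker hfin (α P) (by rwa [hα P hP]) fun v => ?_
  rw [hcv, hc1, one_mul]

/-- A group of automorphisms permuting a finite set of hyperplanes acts on the product of their
defining functionals through a character. -/
theorem Subgroup.exists_character_prod_apply [Infinite K]
    (hα : ∀ U ∈ s, LinearMap.ker (α U) = U) (hs : ⊤ ∉ s) (H : Subgroup (V ≃ₗ[K] V))
    (hH : ∀ g ∈ H, ∀ U ∈ s, U.comap (g : V →ₗ[K] V) ∈ s) :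
    ∃ χ : H →* Kˣ, ∀ (g : H) (v : V),
      ∏ U ∈ s, α U ((g : V ≃ₗ[K] V) v) = χ g * ∏ U ∈ s, α U v := by
  obtain ⟨u, -, hu⟩ := Subspace.exists_mem_forall_notMem ⊤ s
    fun U hU h => hs (top_le_iff.1 h ▸ hU)
  have hne : ∏ U ∈ s, α U u ≠ 0 := Finset.prod_ne_zero_iff.2 fun U hU h0 =>
    hu U hU (hα U hU ▸ LinearMap.mem_ker.2 h0)
  choose c hc0 hc using fun g : H => LinearEquiv.exists_prod_apply_eq_mul hα g.1 (hH g g.2)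
  refine ⟨MonoidHom.mk' (fun g => Units.mk0 (c g) (hc0 g)) fun g h => Units.ext ?_, hc⟩
  refine mul_right_cancel₀ hne ?_
  have h1 := hc (g * h) u
  rw [Subgroup.coe_mul, LinearEquiv.mul_apply, hc g, hc h] at h1
  rw [Units.val_mul, Units.val_mk0, Units.val_mk0, Units.val_mk0, ← h1, mul_assoc]

end ProductOfFunctionals

/-- A subspace of codimension one is a coatom and the kernel of a linear functional. -/
theorem Submodule.isCoatom_and_exists_ker_eq {K V : Type*} [Field K] [AddCommGroup V]
    [Module K V] {U : Submodule K V} (hU : Module.finrank K (V ⧸ U) = 1) :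
    IsCoatom U ∧ ∃ f : V →ₗ[K] K, LinearMap.ker f = U := by
  refine ⟨isSimpleModule_iff_isCoatom.1 (isSimpleModule_iff_finrank_eq_one.2 hU), ?_⟩
  have : Module.Finite K (V ⧸ U) := Module.finite_of_finrank_eq_succ hU
  obtain ⟨φ⟩ := FiniteDimensional.nonempty_linearEquiv_of_finrank_eq
    (hU.trans (Module.finrank_self K).symm)
  exact ⟨(φ : (V ⧸ U) →ₗ[K] K).comp U.mkQ, by rw [LinearEquiv.ker_comp, Submodule.ker_mkQ]⟩

/-- The subgroup of elements of a linear group `H` fixing a subspace pointwise. -/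
def Subgroup.pointwiseStabilizer {K V : Type*} [Field K] [AddCommGroup V] [Module K V]
    (H : Subgroup (V ≃ₗ[K] V)) (U : Submodule K V) : Subgroup H where
  carrier := {h | ∀ w ∈ U, (h : V ≃ₗ[K] V) w = w}
  one_mem' := fun w _ => rfl
  mul_mem' := fun {a b} ha hb w hw => by
    rw [Subgroup.coe_mul, LinearEquiv.mul_apply, hb w hw, ha w hw]
  inv_mem' := fun {a} ha w hw => by
    rw [Subgroup.coe_inv]
    exact (LinearEquiv.symm_apply_eq _).2 (ha w hw).symm

/-- The hyperplanes in the orbit of `U` under a finite group define a character which is faithful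
on the pointwise stabilizer of `U` and trivial on that of any hyperplane outside the orbit. -/
theorem Subgroup.exists_character_of_hyperplane {K V : Type*} [Field K] [CharZero K]
    [AddCommGroup V] [Module K V] (H : Subgroup (V ≃ₗ[K] V)) [Finite H]
    (U : Submodule K V) (hU : Module.finrank K (V ⧸ U) = 1) :
    ∃ χ : H →* Kˣ, (∀ g ∈ H.pointwiseStabilizer U, χ g = 1 → g = 1) ∧
      ∀ P : Submodule K V, IsCoatom P →
        (¬ ∃ h ∈ H, P = U.map (h : V →ₗ[K] V)) →
        ∀ g ∈ H.pointwiseStabilizer P, χ g = 1 := by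
  classical
  have : Infinite K := CharZero.infinite K
  let s : Finset (Submodule K V) :=
    (Set.finite_range fun h : H => U.map ((h : V ≃ₗ[K] V) : V →ₗ[K] V)).toFinset
  have hmem : ∀ P, P ∈ s ↔ ∃ h ∈ H, P = U.map (h : V →ₗ[K] V) := by
    intro P
    simp [s, eq_comm]
  have hcodim : ∀ P ∈ s, Module.finrank K (V ⧸ P) = 1 := by
    intro P hP
    obtain ⟨h, -, rfl⟩ := (hmem P).1 hP
    rw [← hU]
    exact (Submodule.Quotient.equiv U _ h rfl).finrank_eq.symm
  have hcoatom : ∀ P ∈ s, IsCoatom P := fun P hP =>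
    (Submodule.isCoatom_and_exists_ker_eq (hcodim P hP)).1
  have hker : ∀ P : Submodule K V, ∃ f : V →ₗ[K] K, P ∈ s → LinearMap.ker f = P := by
    intro P
    by_cases hP : P ∈ s
    · obtain ⟨f, hf⟩ := (Submodule.isCoatom_and_exists_ker_eq (hcodim P hP)).2
      exact ⟨f, fun _ => hf⟩
    · exact ⟨0, fun h => absurd h hP⟩
  choose α hα using hker
  have hstable : ∀ g ∈ H, ∀ P ∈ s, P.comap (g : V →ₗ[K] V) ∈ s := by
    intro g hg P hP
    obtain ⟨h, hh, rfl⟩ := (hmem P).1 hP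
    refine (hmem _).2 ⟨g⁻¹ * h, H.mul_mem (H.inv_mem hg) hh, ?_⟩
    refine (Submodule.map_equiv_eq_comap_symm g.symm _).symm.trans ?_
    rw [← Submodule.map_comp]
    rfl
  have hUs : U ∈ s := (hmem U).2 ⟨1, H.one_mem, U.map_id.symm⟩
  have htop : ⊤ ∉ s := fun h => (hcoatom ⊤ h).1 rfl
  obtain ⟨χ, hχ⟩ := H.exists_character_prod_apply hα htop hstable
  refine ⟨χ, fun g hg hχg => Subtype.ext ?_, fun P hPc hP g hg => Units.ext ?_⟩
  · refine LinearEquiv.eq_one_of_prod_apply_eq hα hcoatom ?_ (hstable g g.2) hUs hg fun v => ?_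
    · exact H.subtype.isOfFinOrder (isOfFinOrder_of_finite g)
    · rw [hχ, hχg, Units.val_one, one_mul]
  · have hle : ∀ Q ∈ s, ¬ P ≤ Q := fun Q hQ hPQ =>
      hP <| (hmem P).1 <| ((hPc.le_iff.1 hPQ).resolve_left (hcoatom Q hQ).1) ▸ hQ
    obtain ⟨u, -, hu⟩ := Subspace.exists_mem_forall_notMem ⊤ s
      fun Q hQ h => htop (top_le_iff.1 h ▸ hQ)
    have hne : ∏ Q ∈ s, α Q u ≠ 0 := Finset.prod_ne_zero_iff.2 fun Q hQ h0 =>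
      hu Q hQ (hα Q hQ ▸ LinearMap.mem_ker.2 h0)
    have h := LinearEquiv.prod_apply_eq_of_fixes hα (hstable g g.2) hle hg u
    rw [hχ] at h
    exact mul_right_cancel₀ hne (h.trans (one_mul _).symm)


/-- Let `V` be a finite-dimensional complex vector space and `H` a finite subgroup of `GL(V)`
generated by pseudoreflections. Let `W_1, …, W_k` be representatives of the `H`-orbits of the
reflecting hyperplanes of `H`, and let `e_i` be the order of the pointwise stabilizer
`{h ∈ H : h fixes W_i pointwise}`. Then the abelianization `H/[H,H]` is isomorphic to
`ℤ/e_1ℤ × ⋯ × ℤ/e_kℤ`. -/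
theorem abelianization_of_reflection_group
    {V : Type*} [AddCommGroup V] [Module ℂ V] [FiniteDimensional ℂ V]
    (H : Subgroup (V ≃ₗ[ℂ] V)) [Finite H]
    (hgen : H = Subgroup.closure {g : V ≃ₗ[ℂ] V | g ∈ H ∧ g ≠ 1 ∧
      ∃ W : Submodule ℂ V, Module.finrank ℂ (V ⧸ W) = 1 ∧ ∀ w ∈ W, g w = w})
    (k : ℕ) (W : Fin k → Submodule ℂ V)
    -- each `W i` is a reflecting hyperplane of `H`
    (hW : ∀ i, Module.finrank ℂ (V ⧸ W i) = 1 ∧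
      ∃ g ∈ H, g ≠ 1 ∧ ∀ w ∈ W i, g w = w)
    -- every reflecting hyperplane is in the `H`-orbit of exactly one `W i`
    (horbits : ∀ U : Submodule ℂ V, Module.finrank ℂ (V ⧸ U) = 1 →
      (∃ g ∈ H, g ≠ 1 ∧ ∀ w ∈ U, g w = w) →
      ∃! i : Fin k, ∃ h ∈ H, U = (W i).map (h : V →ₗ[ℂ] V))
    (e : Fin k → ℕ)
    (he : ∀ i, e i = Nat.card {h : H // ∀ w ∈ W i, (h : V ≃ₗ[ℂ] V) w = w}) :
    Nonempty (Abelianization H ≃* ((i : Fin k) → Multiplicative (ZMod (e i)))) := by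
  choose χ hfaithful htrivial using fun i => H.exists_character_of_hyperplane (W i) (hW i).1
  have hcyclic : ∀ i, IsCyclic (H.pointwiseStabilizer (W i)) := by
    intro i
    refine isCyclic_of_injective_ringHom
      (((Units.coeHom ℂ).comp (χ i)).comp (H.pointwiseStabilizer (W i)).subtype) ?_
    rw [injective_iff_map_eq_one]
    intro g hg
    exact Subtype.ext (hfaithful i g g.2 (Units.ext hg))
  have hdisjoint : ∀ i j, i ≠ j → ¬ ∃ h ∈ H, W j = (W i).map (h : V →ₗ[ℂ] V) := by
    intro i j hij h
    exact hij ((horbits (W j) (hW j).1 (hW j).2).unique h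
      ⟨1, H.one_mem, (W j).map_id.symm⟩)
  have hclosure : ∀ g ∈ Subgroup.closure {g : V ≃ₗ[ℂ] V | g ∈ H ∧ g ≠ 1 ∧
      ∃ W : Submodule ℂ V, Module.finrank ℂ (V ⧸ W) = 1 ∧ ∀ w ∈ W, g w = w},
      ∃ hg : g ∈ H, Abelianization.of (⟨g, hg⟩ : H) ∈
        ⨆ i, (H.pointwiseStabilizer (W i)).map Abelianization.of := by
    intro g hg
    induction hg using Subgroup.closure_induction with
    | mem g hg =>
      obtain ⟨hgH, hg1, U, hU, hfix⟩ := hg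
      obtain ⟨i, ⟨h, hh, rfl⟩, -⟩ := horbits U hU ⟨g, hgH, hg1, hfix⟩
      refine ⟨hgH, Subgroup.mem_iSup_of_mem i
        ⟨(⟨h, hh⟩ : H)⁻¹ * ⟨g, hgH⟩ * ⟨h, hh⟩, fun w hw => ?_, ?_⟩⟩
      · exact (LinearEquiv.symm_apply_eq h).2 (hfix (h w) (Submodule.mem_map_of_mem hw))
      · rw [map_mul, map_mul, map_inv, mul_right_comm, inv_mul_cancel, one_mul]
    | one => exact ⟨H.one_mem, Subgroup.one_mem _⟩
    | mul a b _ _ ha hb =>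
      obtain ⟨ha, ha'⟩ := ha
      obtain ⟨hb, hb'⟩ := hb
      exact ⟨H.mul_mem ha hb, Subgroup.mul_mem _ ha' hb'⟩
    | inv a _ ha =>
      obtain ⟨ha, ha'⟩ := ha
      exact ⟨H.inv_mem ha, Subgroup.inv_mem _ ha'⟩
  obtain ⟨Φ⟩ := Abelianization.nonempty_mulEquiv_pi (fun i => H.pointwiseStabilizer (W i)) χ
    hfaithful
    (fun i j hij => htrivial i (W j) (Submodule.isCoatom_and_exists_ker_eq (hW j).1).1
      (hdisjoint i j hij)) <| by
    rw [eq_top_iff]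
    intro x _
    obtain ⟨g, rfl⟩ := QuotientGroup.mk_surjective x
    exact (hclosure g (hgen ▸ g.2)).2
  have hcard : ∀ i, e i = Nat.card (H.pointwiseStabilizer (W i)) := he
  obtain rfl : e = fun i => Nat.card (H.pointwiseStabilizer (W i)) := funext hcard
  exact ⟨Φ.trans (MulEquiv.piCongrRight fun i => (zmodCyclicMulEquiv (hcyclic i)).symm)⟩
end

section
/- Fix an integer m ≥ 1 and let μ_m act on ℂ[x, y] by ℂ-algebra automorphisms determined by ζ·x = ζx and ζ·y = ζ^{−1}y. Then the ring of μ_m-invariant polynomials is isomorphic as a ℂ-algebra to ℂ[a, b, c]/(ab − c^m), via a ↦ x^m, b ↦ y^m, c ↦ xy. -/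
open MvPolynomial

namespace ASingularity

variable {R : Type*} [CommRing R] (m : ℕ)

/-- The coordinate ring `R[a,b,c]/(ab - c^m)`. -/
abbrev CoordRing (R : Type*) [CommRing R] (m : ℕ) : Type _ :=
  MvPolynomial (Fin 3) R ⧸ Ideal.span {(X 0 * X 1 - X 2 ^ m : MvPolynomial (Fin 3) R)}

/-- The parametrization `a ↦ x^m`, `b ↦ y^m`, `c ↦ xy`. -/
noncomputable def param : MvPolynomial (Fin 3) R →ₐ[R] MvPolynomial (Fin 2) R :=
  aeval ![X 0 ^ m, X 1 ^ m, X 0 * X 1]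

/-- The map `R[a,b,c]/(ab - c^m) → R[x,y]` induced by the parametrization. -/
noncomputable def paramQuot : CoordRing R m →ₐ[R] MvPolynomial (Fin 2) R :=
  Ideal.Quotient.liftₐ _ (param m) fun p hp => by
    obtain ⟨q, rfl⟩ := Ideal.mem_span_singleton.mp hp
    simp [param, mul_pow]

theorem paramQuot_mk (p : MvPolynomial (Fin 3) R) :
    paramQuot m (Ideal.Quotient.mk _ p) = param m p := rfl

/-- The element of `R[a,b,c]/(ab - c^m)` attached to a monomial `x^i y^j`; it is a preimage of that
monomial when `m` divides `i - j`. -/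
noncomputable def monomialLift (d : Fin 2 →₀ ℕ) : CoordRing R m :=
  Ideal.Quotient.mk _ (X 0 ^ ((d 0 - d 1) / m) * X 1 ^ ((d 1 - d 0) / m) * X 2 ^ min (d 0) (d 1))

/-- The linear extension of `monomialLift`. -/
noncomputable def linearLift : MvPolynomial (Fin 2) R →ₗ[R] CoordRing R m :=
  (basisMonomials (Fin 2) R).constr R (monomialLift m)

theorem linearLift_monomial (d : Fin 2 →₀ ℕ) (r : R) :
    linearLift m (monomial d r) = r • monomialLift m d := by
  have h : monomial d r = r • basisMonomials (Fin 2) R d := by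
    simp [smul_monomial]
  rw [h, map_smul, linearLift, Module.Basis.constr_basis]

theorem monomial_eq_X_pow_mul_X_pow (d : Fin 2 →₀ ℕ) :
    (monomial d 1 : MvPolynomial (Fin 2) R) = X 0 ^ d 0 * X 1 ^ d 1 := by
  simp [monomial_eq, Finsupp.prod_fintype]

theorem mk_X_two_pow_mul (k : ℕ) :
    (Ideal.Quotient.mk _ (X 2 ^ (m * k)) : CoordRing R m) =
      Ideal.Quotient.mk _ (X 0 ^ k * X 1 ^ k) := by
  have h : (Ideal.Quotient.mk _ (X 2 ^ m) : CoordRing R m) = Ideal.Quotient.mk _ (X 0 * X 1) := by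
    rw [eq_comm, Ideal.Quotient.eq]
    exact Ideal.mem_span_singleton_self _
  rw [pow_mul, map_pow, h, ← map_pow, mul_pow]

variable {m}

theorem linearLift_X_pow_mul_X_pow (hm : 0 < m) (i j k : ℕ) :
    linearLift m (X 0 ^ (m * i + k) * X 1 ^ (m * j + k) : MvPolynomial (Fin 2) R) =
      Ideal.Quotient.mk _ (X 0 ^ i * X 1 ^ j * X 2 ^ k) := by
  have key := monomial_eq_X_pow_mul_X_pow (R := R)
    (Finsupp.equivFunOnFinite.symm ![m * i + k, m * j + k])
  simp only [Finsupp.equivFunOnFinite_symm_apply_apply, Matrix.cons_val_zero,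
    Matrix.cons_val_one] at key
  rw [← key, linearLift_monomial, one_smul, monomialLift]
  simp only [Finsupp.equivFunOnFinite_symm_apply_apply, Matrix.cons_val_zero,
    Matrix.cons_val_one, Nat.add_sub_add_right, ← Nat.mul_sub, Nat.mul_div_cancel_left _ hm,
    min_add_add_right, Nat.mul_min_mul_left]
  rw [pow_add, map_mul, map_mul _ (X 2 ^ _), mk_X_two_pow_mul, ← map_mul, ← map_mul]
  congr 1
  rcases le_total i j with h | h
  · obtain ⟨t, rfl⟩ := Nat.exists_eq_add_of_le h
    simp
    ring
  · obtain ⟨t, rfl⟩ := Nat.exists_eq_add_of_le h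
    simp
    ring

theorem linearLift_param (hm : 0 < m) (p : MvPolynomial (Fin 3) R) :
    linearLift m (param m p) = Ideal.Quotient.mk _ p := by
  induction p using MvPolynomial.induction_on' with
  | add p q hp hq => rw [map_add, map_add, hp, hq, map_add]
  | monomial d r =>
    have h : (monomial d r : MvPolynomial (Fin 3) R) =
        r • (X 0 ^ d 0 * X 1 ^ d 1 * X 2 ^ d 2) := by
      simp [monomial_eq, Finsupp.prod_fintype, Fin.prod_univ_three, smul_eq_C_mul]
    have h' : param m (X 0 ^ d 0 * X 1 ^ d 1 * X 2 ^ d 2 : MvPolynomial (Fin 3) R) =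
        X 0 ^ (m * d 0 + d 2) * X 1 ^ (m * d 1 + d 2) := by
      simp [param]
      ring
    rw [h, map_smul, h', map_smul, linearLift_X_pow_mul_X_pow hm]
    rfl

theorem paramQuot_injective (hm : 0 < m) :
    Function.Injective (paramQuot m : CoordRing R m →ₐ[R] MvPolynomial (Fin 2) R) := by
  apply Function.LeftInverse.injective (g := linearLift m)
  intro q
  obtain ⟨p, rfl⟩ := Ideal.Quotient.mk_surjective q
  rw [paramQuot_mk, linearLift_param hm]

theorem paramQuot_monomialLift {d : Fin 2 →₀ ℕ} (hd : d 0 ≡ d 1 [MOD m]) :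
    paramQuot m (monomialLift m d) = (monomial d 1 : MvPolynomial (Fin 2) R) := by
  rw [monomialLift, paramQuot_mk, monomial_eq_X_pow_mul_X_pow]
  simp only [param, map_mul, map_pow, aeval_X, Matrix.cons_val, ← pow_mul, mul_pow]
  rcases le_total (d 0) (d 1) with h | h
  · rw [Nat.mul_div_cancel' ((Nat.modEq_iff_dvd' h).mp hd), Nat.sub_eq_zero_of_le h, min_eq_left h]
    obtain ⟨t, ht⟩ := Nat.exists_eq_add_of_le h
    simp [ht]
    ring
  · rw [Nat.mul_div_cancel' ((Nat.modEq_iff_dvd' h).mp hd.symm), Nat.sub_eq_zero_of_le h,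
      min_eq_right h]
    obtain ⟨t, ht⟩ := Nat.exists_eq_add_of_le h
    simp [ht]
    ring

theorem mem_range_paramQuot {p : MvPolynomial (Fin 2) R}
    (hp : ∀ d ∈ p.support, d 0 ≡ d 1 [MOD m]) : p ∈ (paramQuot (R := R) m).range := by
  rw [p.as_sum]
  refine Subalgebra.sum_mem _ fun d hd => ⟨coeff d p • monomialLift m d, ?_⟩
  change paramQuot m _ = _
  rw [map_smul, paramQuot_monomialLift (hp d hd), smul_monomial, smul_eq_mul, mul_one]

theorem coeff_aeval_diagonal (u v : R) (p : MvPolynomial (Fin 2) R) (d : Fin 2 →₀ ℕ) :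
    coeff d (aeval ![C u * X 0, C v * X 1] p) = u ^ d 0 * v ^ d 1 * coeff d p := by
  induction p using MvPolynomial.induction_on' with
  | add p q hp hq => rw [map_add, coeff_add, hp, hq, coeff_add, mul_add]
  | monomial e r =>
    have h : aeval ![C u * X 0, C v * X 1] (monomial e r) =
        (C (r * (u ^ e 0 * v ^ e 1)) * (X 0 ^ e 0 * X 1 ^ e 1) : MvPolynomial (Fin 2) R) := by
      simp [-aeval_eq_bind₁, aeval_monomial, Finsupp.prod_fintype, algebraMap_eq]
      ring
    rw [h, ← monomial_eq_X_pow_mul_X_pow, coeff_C_mul, coeff_monomial, coeff_monomial]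
    split_ifs with hed
    · subst hed
      ring
    · simp

theorem aeval_diagonal_param {K : Type*} [Field K] {ζ : K} (hm : m ≠ 0) (hζ : ζ ^ m = 1)
    (p : MvPolynomial (Fin 3) K) :
    aeval ![C ζ * X 0, C ζ⁻¹ * X 1] (param m p) = param m p := by
  have hζ0 : ζ ≠ 0 := by
    rintro rfl
    simp [hm] at hζ
  rw [← AlgHom.comp_apply]
  congr 1
  ext i : 1
  fin_cases i
  · simp [-aeval_eq_bind₁, param, mul_pow, ← C_pow, hζ]
  · simp [-aeval_eq_bind₁, param, mul_pow, ← C_pow, hζ]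
  · have h : C ζ * C ζ⁻¹ = (1 : MvPolynomial (Fin 2) K) := by
      rw [← map_mul, mul_inv_cancel₀ hζ0, map_one]
    simp only [param, AlgHom.comp_apply, aeval_X, Fin.reduceFinMk, Matrix.cons_val, map_mul]
    linear_combination X 0 * X 1 * h

theorem modEq_of_mem_support {K : Type*} [Field K] {ζ : K} (hm : m ≠ 0)
    (hζ : IsPrimitiveRoot ζ m) {p : MvPolynomial (Fin 2) K}
    (hp : aeval ![C ζ * X 0, C ζ⁻¹ * X 1] p = p) {d : Fin 2 →₀ ℕ} (hd : d ∈ p.support) :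
    d 0 ≡ d 1 [MOD m] := by
  have hc := coeff_aeval_diagonal ζ ζ⁻¹ p d
  rw [hp] at hc
  have h1 : ζ ^ d 0 * ζ⁻¹ ^ d 1 = 1 :=
    mul_right_cancel₀ (mem_support_iff.mp hd) (by rw [← hc, one_mul])
  rw [inv_pow, mul_inv_eq_one₀ (pow_ne_zero _ (hζ.ne_zero hm))] at h1
  rw [hζ.eq_orderOf]
  exact (hζ.isOfFinOrder hm).pow_eq_pow_iff_modEq.mp h1

end ASingularity

/-- Fix `m ≥ 1` and let `μ_m` act on `ℂ[x,y]` by `ζ·x = ζx`, `ζ·y = ζ⁻¹y`. Then the ring of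
`μ_m`-invariant polynomials is isomorphic as a ℂ-algebra to `ℂ[a,b,c]/(ab - c^m)`, via
`a ↦ x^m`, `b ↦ y^m`, `c ↦ xy`. -/
theorem mu_m_invariants_iso_Am_singularity (m : ℕ) (hm : 1 ≤ m)
    (Inv : Subalgebra ℂ (MvPolynomial (Fin 2) ℂ))
    (hInv : ∀ p : MvPolynomial (Fin 2) ℂ, p ∈ Inv ↔
      ∀ ζ : ℂ, ζ ^ m = 1 → aeval ![C ζ * X 0, C ζ⁻¹ * X 1] p = p) :
    ∃ e : (MvPolynomial (Fin 3) ℂ ⧸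
        Ideal.span {(X 0 * X 1 - X 2 ^ m : MvPolynomial (Fin 3) ℂ)}) ≃ₐ[ℂ] Inv,
      ((e (Ideal.Quotient.mk _ (X 0)) : Inv) : MvPolynomial (Fin 2) ℂ) = X 0 ^ m ∧
      ((e (Ideal.Quotient.mk _ (X 1)) : Inv) : MvPolynomial (Fin 2) ℂ) = X 1 ^ m ∧
      ((e (Ideal.Quotient.mk _ (X 2)) : Inv) : MvPolynomial (Fin 2) ℂ) = X 0 * X 1 := by
  have hm0 : m ≠ 0 := Nat.one_le_iff_ne_zero.mp hm
  have hmem : ∀ q, ASingularity.paramQuot m q ∈ Inv := fun q => by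
    obtain ⟨p, rfl⟩ := Ideal.Quotient.mk_surjective q
    exact (hInv _).mpr fun ζ hζ => ASingularity.aeval_diagonal_param hm0 hζ p
  refine ⟨AlgEquiv.ofBijective ((ASingularity.paramQuot m).codRestrict Inv hmem) ⟨?_, ?_⟩,
    ?_, ?_, ?_⟩
  · exact (AlgHom.injective_codRestrict _ _ _).mpr (ASingularity.paramQuot_injective hm)
  · rintro ⟨p, hp⟩
    have hζ := Complex.isPrimitiveRoot_exp m hm0
    obtain ⟨q, hq⟩ := ASingularity.mem_range_paramQuot fun d hd =>
      ASingularity.modEq_of_mem_support hm0 hζ ((hInv p).mp hp _ hζ.pow_eq_one) hd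
    exact ⟨q, Subtype.ext hq⟩
  all_goals
    change ASingularity.param m (X _) = _
    simp [ASingularity.param]
end
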